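/- Let U be a topological space and G : U → ℝ. Then G is upper semicontinuous if and only if the set {(λ, u, r) ∈ ℝ × U × ℝ : 0 ≤ λ and r ≤ λ·G(u)} is closed in ℝ × U × ℝ. -/

import Mathlib

/-- Lemma 3.1(ii): a real-valued function `G` on a topological space is upper semicontinuous
iff it is `ℝ₊`-uniformly upper semicontinuous, i.e. iff the set
`{(λ, u, r) : 0 ≤ λ ∧ r ≤ λ * G u}` is closed. -/
theorem stmt_7 {U : Type*} [TopologicalSpace U] (G : U → ℝ) :
    UpperSemicontinuous G ↔
      IsClosed {p : ℝ × U × ℝ | 0 ≤ p.1 ∧ p.2.2 ≤ p.1 * G p.2.1} := by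
  constructor
  · intro hG
    rw [← isOpen_compl_iff, isOpen_iff_mem_nhds]
    rintro ⟨l, u, r⟩ hp
    by_cases hl : l < 0
    · have ho : IsOpen {p : ℝ × U × ℝ | p.1 < 0} := isOpen_lt (by fun_prop) (by fun_prop)
      filter_upwards [ho.mem_nhds (show (l, u, r) ∈ {p : ℝ × U × ℝ | p.1 < 0} from hl)] with q hq
      intro h
      exact absurd h.1 (not_le.mpr hq)
    · have hl' : 0 ≤ l := not_lt.mp hl
      have hr : l * G u < r := by
        by_contra h
        exact hp ⟨hl', not_lt.mp h⟩
      obtain ⟨c, hc, hcr⟩ : ∃ c, G u < c ∧ l * c < r := by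
        have hd : 0 < (r - l * G u) / (l + 1) := div_pos (by linarith) (by linarith)
        have he : (r - l * G u) / (l + 1) * (l + 1) = r - l * G u :=
          div_mul_cancel₀ _ (by linarith)
        exact ⟨G u + (r - l * G u) / (l + 1), by linarith, by nlinarith⟩
      have ho : IsOpen {p : ℝ × U × ℝ | p.1 * c < p.2.2} :=
        isOpen_lt (by fun_prop) (by fun_prop)
      have ho2 : IsOpen {p : ℝ × U × ℝ | G p.2.1 < c} :=
        (upperSemicontinuous_iff_isOpen_preimage.1 hG c).preimage
          (f := fun p : ℝ × U × ℝ => p.2.1) (by fun_prop)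
      filter_upwards [ho.mem_nhds (show (l, u, r) ∈ {p : ℝ × U × ℝ | p.1 * c < p.2.2} from hcr),
        ho2.mem_nhds (show (l, u, r) ∈ {p : ℝ × U × ℝ | G p.2.1 < c} from hc)] with q hq hq2
      rintro ⟨h1, h2⟩
      have h3 := mul_le_mul_of_nonneg_left (le_of_lt hq2) h1
      have hq3 : q.1 * c < q.2.2 := hq
      linarith
  · intro h
    rw [upperSemicontinuous_iff_isClosed_preimage]
    intro y
    have := h.preimage (f := fun u : U => ((1 : ℝ), u, y)) (by fun_prop)
    simpa [Set.preimage, Set.Ici] using this
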